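/- Let a_1 ≥ a_2 > 0 and b_1 ≥ b_2 > 0. Then the function x ↦ (sinh(a_1·x)·sinh(a_2·x))/(sinh(b_1·x)·sinh(b_2·x)) (extended by continuity at x = 0) is positive definite if and only if a_1 ≤ b_1 and a_1 + a_2 ≤ b_1 + b_2. -/

import Mathlib

open scoped ComplexOrder

/-- A function `φ : ℝ → ℂ` is positive definite if for every `n`, all real numbers
`x 1, …, x n` and complex numbers `c 1, …, c n`, the sum
`∑ i j, c i * conj (c j) * φ (x i - x j)` is a nonnegative real number. -/
def IsPosDefFun (φ : ℝ → ℂ) : Prop :=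
  ∀ (n : ℕ) (x : Fin n → ℝ) (c : Fin n → ℂ),
    0 ≤ ∑ i, ∑ j, c i * (starRingEnd ℂ) (c j) * φ (x i - x j)

/-!
*Sufficiency.* By Euler's product, `sinh (a x) / sinh (b x)` with `0 ≤ a ≤ b` is a limit of products
of functions `(1 + (u x)²) / (1 + (v x)²)` with `|u| ≤ |v|`. Each of these is a nonnegative
combination of `1` and `(1 + (v x)²)⁻¹`, which is positive definite as the Fourier transform of a
Laplace distribution. The case `a₂ > b₂` reduces to smaller parameters through the identity
`sinh a₁ * sinh a₂ = sinh (a₁ + a₂ - b₂) * sinh b₂ + sinh (a₁ - b₂) * sinh (a₂ - b₂)`.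

*Necessity.* The function grows like `exp ((a₁ + a₂ - b₁ - b₂) x)`, and positive definite functions
are bounded; hence `a₁ + a₂ ≤ b₁ + b₂`. Since the functions `(-1)ⁿ φ⁽²ⁿ⁾` inherit positive
definiteness from `φ`, through limits of second differences, the even Taylor coefficients of
`y ↦ φ (i y)` at `0` are nonnegative. So if `φ 0 > 0` and `φ` is real analytic on the line and
holomorphic on a disc around `0`, it cannot vanish at two opposite points of the imaginary diameter
of that disc. If `b₁ < a₁`, however, the zeros `± i π / a₁` of the numerator precede the first poles
`± i π / b₁`.
-/

open Asymptotics Filter MeasureTheory Set Topology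
open scoped ComplexConjugate Real

namespace IsPosDefFun

variable {φ ψ : ℝ → ℂ}

lemma apply_zero_nonneg (h : IsPosDefFun φ) : 0 ≤ φ 0 := by
  simpa using h 1 ![0] ![1]

lemma map_neg (h : IsPosDefFun φ) (x : ℝ) : φ (-x) = conj (φ x) := by
  have h_zero := h.apply_zero_nonneg
  have h_one : 0 ≤ φ 0 + φ x + (φ (-x) + φ 0) := by
    simpa [Fin.sum_univ_two] using h 2 ![x, 0] ![1, 1]
  have h_I : 0 ≤ φ 0 - Complex.I * φ x + (Complex.I * φ (-x) + φ 0) := by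
    simpa [Fin.sum_univ_two, sub_eq_add_neg] using h 2 ![x, 0] ![1, Complex.I]
  simp only [Complex.le_def, Complex.zero_im, Complex.add_im, Complex.sub_im, Complex.I_mul_im]
    at h_zero h_one h_I
  apply Complex.ext <;> simp only [Complex.conj_re, Complex.conj_im] <;>
    linarith [h_zero.2, h_one.2, h_I.2]

lemma sum_eq_dotProduct_mulVec (φ : ℝ → ℂ) {n : ℕ} (x : Fin n → ℝ) (c : Fin n → ℂ) :
    ∑ i, ∑ j, c i * conj (c j) * φ (x i - x j) =
      c ⬝ᵥ (Matrix.of fun i j => φ (x i - x j)).mulVec (star c) := by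
  simp only [dotProduct, Matrix.mulVec, Matrix.of_apply, Finset.mul_sum, Pi.star_apply,
    Complex.star_def]
  exact Finset.sum_congr rfl fun i _ => Finset.sum_congr rfl fun j _ => by ring

lemma iff_posSemidef :
    IsPosDefFun φ ↔ ∀ (n : ℕ) (x : Fin n → ℝ), (Matrix.of fun i j => φ (x i - x j)).PosSemidef := by
  refine ⟨fun h n x => .of_dotProduct_mulVec_nonneg ?_ fun c => ?_, fun h n x c => ?_⟩
  · ext i j
    rw [Matrix.conjTranspose_apply, Matrix.of_apply, Matrix.of_apply, ← neg_sub, h.map_neg,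
      Complex.star_def, Complex.conj_conj]
  · simpa only [sum_eq_dotProduct_mulVec, star_star] using h n x (star c)
  · simpa only [sum_eq_dotProduct_mulVec, star_star] using
      (h n x).dotProduct_mulVec_nonneg (star c)

lemma add (hφ : IsPosDefFun φ) (hψ : IsPosDefFun ψ) : IsPosDefFun fun x => φ x + ψ x :=
  iff_posSemidef.2 fun n x =>
    (iff_posSemidef.1 hφ n x).add (iff_posSemidef.1 hψ n x)

lemma mul (hφ : IsPosDefFun φ) (hψ : IsPosDefFun ψ) : IsPosDefFun fun x => φ x * ψ x :=
  iff_posSemidef.2 fun n x =>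
    (iff_posSemidef.1 hφ n x).hadamard (iff_posSemidef.1 hψ n x)

lemma of_mul_conj (g : ℝ → ℂ) (hg : ∀ x y, φ (x - y) = g x * conj (g y)) : IsPosDefFun φ :=
  iff_posSemidef.2 fun n x => by
    simp only [hg]
    exact Matrix.posSemidef_vecMulVec_self_star fun i => g (x i)

lemma exp_mul_I (t : ℝ) : IsPosDefFun fun x => Complex.exp (t * x * Complex.I) :=
  of_mul_conj (fun x => Complex.exp (t * x * Complex.I)) fun x y => by
    rw [← Complex.exp_conj, ← Complex.exp_add]
    simp only [map_mul, Complex.conj_ofReal, Complex.conj_I]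
    push_cast
    ring_nf

lemma const {r : ℝ} (hr : 0 ≤ r) : IsPosDefFun fun _ => (r : ℂ) :=
  of_mul_conj (fun _ => (√r : ℂ)) fun _ _ => by
    rw [Complex.conj_ofReal, ← Complex.ofReal_mul, Real.mul_self_sqrt hr]

lemma prod {ι : Type*} {F : ι → ℝ → ℂ} (s : Finset ι) (hF : ∀ k ∈ s, IsPosDefFun (F k)) :
    IsPosDefFun fun x => ∏ k ∈ s, F k x := by
  classical
  induction s using Finset.induction_on with
  | empty => simpa only [Finset.prod_empty, Complex.ofReal_one] using const zero_le_one
  | insert k s hk ih =>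
    rw [Finset.forall_mem_insert] at hF
    simpa only [Finset.prod_insert hk] using hF.1.mul (ih hF.2)

lemma of_tendsto {ι : Type*} {l : Filter ι} [l.NeBot] {F : ι → ℝ → ℂ}
    (hF : ∀ᶠ k in l, IsPosDefFun (F k)) (hlim : ∀ x, Tendsto (fun k => F k x) l (𝓝 (φ x))) :
    IsPosDefFun φ := fun n x c =>
  ge_of_tendsto (tendsto_finsetSum _ fun i _ => tendsto_finsetSum _ fun j _ =>
    (hlim (x i - x j)).const_mul _) (hF.mono fun _ hk => hk n x c)

lemma integral {α : Type*} [MeasurableSpace α] {μ : Measure α} {F : α → ℝ → ℂ}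
    (hF : ∀ᵐ s ∂μ, IsPosDefFun (F s)) (hint : ∀ x, Integrable (fun s => F s x) μ) :
    IsPosDefFun fun x => ∫ s, F s x ∂μ := by
  intro n x c
  have hij (i j : Fin n) : Integrable (fun s => c i * conj (c j) * F s (x i - x j)) μ :=
    (hint _).const_mul _
  simp only [← integral_const_mul]
  simp only [← integral_finsetSum _ fun j _ => hij _ j]
  rw [← integral_finsetSum _ fun i _ => integrable_finsetSum _ fun j _ => hij i j]
  exact integral_nonneg_of_ae (hF.mono fun s hs => hs n x c)

lemma inv_one_add_mul_I (u : ℝ) : IsPosDefFun fun x => (1 + u * x * Complex.I)⁻¹ := by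
  have hre (x : ℝ) : (-(1 + u * x * Complex.I)).re < 0 := by simp
  have laplace (x : ℝ) : (1 + u * x * Complex.I)⁻¹ =
      ∫ s : ℝ in Ioi 0, Complex.exp (-(1 + u * x * Complex.I) * s) := by
    rw [integral_exp_mul_complex_Ioi (hre x), Complex.ofReal_zero, mul_zero, Complex.exp_zero,
      neg_div_neg_eq, one_div]
  simp only [laplace]
  refine integral (ae_of_all _ fun s => ?_) fun x => integrableOn_exp_mul_complex_Ioi (hre x) 0
  convert (const (Real.exp_nonneg (-s))).mul (exp_mul_I (-s * u)) using 2 with x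
  rw [Complex.ofReal_exp, ← Complex.exp_add]
  push_cast
  ring_nf

lemma inv_one_add_sq (u : ℝ) : IsPosDefFun fun x => (1 + (u * x : ℂ) ^ 2)⁻¹ := by
  convert (inv_one_add_mul_I u).mul (inv_one_add_mul_I (-u)) using 2 with x
  rw [← mul_inv, Complex.ofReal_neg]
  congr 1
  linear_combination ((u : ℂ) * x) ^ 2 * Complex.I_sq

lemma one_add_sq_div_one_add_sq {u v : ℝ} (hv : v ≠ 0) (huv : |u| ≤ |v|) :
    IsPosDefFun fun x => (1 + (u * x : ℂ) ^ 2) / (1 + (v * x : ℂ) ^ 2) := by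
  have hle : u ^ 2 / v ^ 2 ≤ 1 := div_le_one_of_le₀ (sq_le_sq.2 huv) (sq_nonneg v)
  convert (const (by positivity : 0 ≤ u ^ 2 / v ^ 2)).add
    ((const (sub_nonneg.2 hle)).mul (inv_one_add_sq v)) using 2 with x
  norm_cast
  have : 1 + (v * x) ^ 2 ≠ 0 := by positivity
  field_simp
  ring

lemma re_le (h : IsPosDefFun φ) (x : ℝ) : (φ x).re ≤ (φ 0).re := by
  have h_sub : 0 ≤ φ 0 - φ x + (-conj (φ x) + φ 0) := by
    simpa [Fin.sum_univ_two, sub_eq_add_neg, h.map_neg] using h 2 ![x, 0] ![1, -1]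
  simp only [Complex.le_def, Complex.zero_re, Complex.add_re, Complex.sub_re, Complex.neg_re,
    Complex.conj_re] at h_sub
  linarith [h_sub.1]

lemma secondDifference (h : IsPosDefFun φ) (t : ℝ) :
    IsPosDefFun fun x => 2 * φ x - φ (x + t) - φ (x - t) := by
  intro n x c
  convert h (n + n) (Fin.append x fun i => x i + t) (Fin.append c (-c)) using 1
  simp only [Fin.sum_univ_add, Fin.append_left, Fin.append_right, ← Finset.sum_add_distrib]
  refine Finset.sum_congr rfl fun i _ => Finset.sum_congr rfl fun j _ => ?_
  simp only [Pi.neg_apply, _root_.map_neg, sub_add_eq_sub_sub, add_sub_right_comm]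
  ring_nf

end IsPosDefFun

lemma tendsto_symm_secondDifference {E : Type*} [NormedAddCommGroup E] [NormedSpace ℝ E]
    {f : ℝ → E} (hf : ContDiff ℝ 2 f) (x : ℝ) :
    Tendsto (fun t => (t ^ 2)⁻¹ • (f (x + t) + f (x - t) - (2 : ℝ) • f x)) (𝓝[≠] 0)
      (𝓝 (iteratedDeriv 2 f x)) := by
  have taylor := taylor_tendsto convex_univ (mem_univ x) hf.contDiffOn
  rw [nhdsWithin_univ] at taylor
  have h_add : Tendsto (x + ·) (𝓝[≠] 0) (𝓝 x) := by
    simpa using ((continuous_const_add x).tendsto 0).mono_left nhdsWithin_le_nhds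
  have h_sub : Tendsto (x - ·) (𝓝[≠] 0) (𝓝 x) := by
    simpa using ((continuous_sub_left x).tendsto 0).mono_left nhdsWithin_le_nhds
  have expansion (s : ℝ) : taylorWithinEval f 2 univ x (x + s) =
      f x + s • deriv f x + (s ^ 2 / 2) • iteratedDeriv 2 f x := by
    simp only [taylorWithinEval_succ, taylor_within_zero_eval, iteratedDerivWithin_univ,
      zero_add, iteratedDeriv_one, add_sub_cancel_left]
    norm_num
    ring_nf
  have h_sum := ((taylor.comp h_add).add (taylor.comp h_sub)).add_const (iteratedDeriv 2 f x)
  rw [add_zero, zero_add] at h_sum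
  refine h_sum.congr' ?_
  filter_upwards [self_mem_nhdsWithin] with t (ht : t ≠ 0)
  simp only [Function.comp_apply, sub_eq_add_neg x t, expansion, add_sub_cancel_left]
  match_scalars <;> field_simp <;> ring

namespace IsPosDefFun

variable {φ : ℝ → ℂ}

lemma neg_iteratedDeriv_two (h : IsPosDefFun φ) (hφ : ContDiff ℝ 2 φ) :
    IsPosDefFun fun x => -iteratedDeriv 2 φ x := by
  refine of_tendsto (l := 𝓝[≠] (0 : ℝ)) (F := fun t x => (((t ^ 2)⁻¹ : ℝ) : ℂ) *
    (2 * φ x - φ (x + t) - φ (x - t))) (.of_forall fun t =>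
      (const (by positivity)).mul (h.secondDifference t)) fun x => ?_
  refine (tendsto_symm_secondDifference hφ x).neg.congr fun t => ?_
  simp only [Complex.real_smul]
  push_cast
  ring

lemma neg_one_pow_mul_iteratedDeriv (h : IsPosDefFun φ) (n : ℕ) (hφ : ContDiff ℝ (2 * n : ℕ) φ) :
    IsPosDefFun fun x => (-1) ^ n * iteratedDeriv (2 * n) φ x := by
  induction n generalizing φ with
  | zero => simpa using h
  | succ n ih =>
    have h_two : IsPosDefFun fun x => -iteratedDeriv 2 φ x :=
      h.neg_iteratedDeriv_two (hφ.of_le (by exact_mod_cast (by omega : 2 ≤ 2 * (n + 1))))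
    have h_contDiff : ContDiff ℝ (2 * n : ℕ) fun x => -iteratedDeriv 2 φ x := by
      rw [iteratedDeriv_eq_iterate]
      exact (ContDiff.iterate_deriv' (2 * n) 2 hφ).neg
    convert ih h_two h_contDiff using 2 with x
    rw [iteratedDeriv_fun_neg, pow_succ, mul_neg_one, neg_mul, mul_neg]
    simp only [iteratedDeriv_eq_iterate, mul_add_one, Function.iterate_add_apply]

end IsPosDefFun

lemma iteratedDeriv_comp_ofReal {G : ℂ → ℂ} (hG : ∀ x : ℝ, AnalyticAt ℂ G x) (n : ℕ) :
    iteratedDeriv n (fun x : ℝ => G x) = fun x : ℝ => iteratedDeriv n G x := by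
  induction n with
  | zero => simp
  | succ n ih =>
    ext x
    rw [iteratedDeriv_succ, ih, iteratedDeriv_succ, iteratedDeriv_eq_iterate]
    exact ((hG x).iterated_deriv n).differentiableAt.hasDerivAt.comp_ofReal.deriv

lemma contDiff_comp_ofReal {G : ℂ → ℂ} (hG : ∀ x : ℝ, AnalyticAt ℂ G x) {n : WithTop ℕ∞} :
    ContDiff ℝ n fun x : ℝ => G x :=
  contDiff_iff_contDiffAt.2 fun x =>
    ((hG x).contDiffAt.restrict_scalars ℝ).comp x Complex.ofRealCLM.contDiff.contDiffAt

-- In the Taylor expansions at `0` the odd terms cancel and the even ones are nonnegative.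
lemma IsPosDefFun.two_mul_apply_zero_le {G : ℂ → ℂ} (h : IsPosDefFun fun x : ℝ => G x)
    (hG : ∀ x : ℝ, AnalyticAt ℂ G x) {r : ℝ} (hr : DifferentiableOn ℂ G (Metric.ball 0 r))
    {y : ℝ} (hy : |y| < r) : 2 * G 0 ≤ G (y * Complex.I) + G (-(y * Complex.I)) := by
  have mem_ball : (y : ℂ) * Complex.I ∈ Metric.ball 0 r := by simpa using hy
  have neg_mem_ball : -((y : ℂ) * Complex.I) ∈ Metric.ball 0 r := by simpa using hy
  have taylor := (Complex.hasSum_taylorSeries_on_ball hr mem_ball).add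
    (Complex.hasSum_taylorSeries_on_ball hr neg_mem_ball)
  refine le_trans (by simp [two_mul]) (le_hasSum taylor 0 fun n _ => ?_)
  obtain ⟨k, rfl | rfl⟩ := Nat.even_or_odd' n
  · have hk : 0 ≤ (-1) ^ k * iteratedDeriv (2 * k) G 0 := by
      simpa only [iteratedDeriv_comp_ofReal hG, Complex.ofReal_zero] using
        (h.neg_one_pow_mul_iteratedDeriv k (contDiff_comp_ofReal hG)).apply_zero_nonneg
    have hc : (0 : ℂ) ≤ ((2 * ((2 * k).factorial : ℝ)⁻¹ * (y ^ 2) ^ k : ℝ) : ℂ) :=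
      Complex.zero_le_real.2 (by positivity)
    convert mul_nonneg hc hk using 1
    simp only [sub_zero, smul_eq_mul, (even_two_mul k).neg_pow, mul_pow, pow_mul Complex.I,
      Complex.I_sq]
    push_cast
    ring
  · simp [(odd_two_mul_add_one k).neg_pow]

/-- The entire function `z ↦ sinh (a z) / z`, with value `a` at `0`. -/
noncomputable def sinhSlope (a : ℝ) : ℂ → ℂ :=
  dslope (fun z => Complex.sinh (a * z)) 0

/-- The function `z ↦ sinh (a z) / sinh (b z)`, with value `a / b` at `0`. It is holomorphic on
the strip `|b * z.im| < π`. -/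
noncomputable def sinhRatio (a b : ℝ) (z : ℂ) : ℂ :=
  sinhSlope a z / sinhSlope b z

lemma sinhSlope_zero (a : ℝ) : sinhSlope a 0 = a := by
  have : HasDerivAt (fun z : ℂ => Complex.sinh (a * z)) a 0 := by
    simpa using ((hasDerivAt_id (0 : ℂ)).const_mul (a : ℂ)).csinh
  rw [sinhSlope, dslope_same, this.deriv]

lemma sinhSlope_of_ne_zero (a : ℝ) {z : ℂ} (hz : z ≠ 0) :
    sinhSlope a z = Complex.sinh (a * z) / z := by
  simp [sinhSlope, dslope_of_ne _ hz, slope_def_field]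

lemma differentiable_sinhSlope (a : ℝ) : Differentiable ℂ (sinhSlope a) :=
  differentiableOn_univ.1 <| (Complex.differentiableOn_dslope univ_mem).2
    (differentiable_id.const_mul (a : ℂ)).csinh.differentiableOn

lemma sinhSlope_neg (a : ℝ) (z : ℂ) : sinhSlope a (-z) = sinhSlope a z := by
  rcases eq_or_ne z 0 with rfl | hz
  · rw [neg_zero]
  · rw [sinhSlope_of_ne_zero a hz, sinhSlope_of_ne_zero a (neg_ne_zero.2 hz), mul_neg,
      Complex.sinh_neg, neg_div_neg_eq]

lemma sinhSlope_pi_div_mul_I {a : ℝ} (ha : a ≠ 0) : sinhSlope a ((π / a : ℝ) * Complex.I) = 0 := by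
  have hz : ((π / a : ℝ) : ℂ) * Complex.I ≠ 0 :=
    mul_ne_zero (Complex.ofReal_ne_zero.2 (div_ne_zero Real.pi_ne_zero ha)) Complex.I_ne_zero
  rw [sinhSlope_of_ne_zero a hz, ← mul_assoc, ← Complex.ofReal_mul, mul_div_cancel₀ _ ha,
    Complex.sinh_mul_I, Complex.sin_pi, zero_mul, zero_div]

lemma csinh_eq_zero_iff_of_abs_im_lt_pi {z : ℂ} (hz : |z.im| < π) :
    Complex.sinh z = 0 ↔ z = 0 := by
  refine ⟨fun h => ?_, fun h => by rw [h, Complex.sinh_zero]⟩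
  have h_sin : Complex.sin (z * Complex.I) = 0 := by rw [Complex.sin_mul_I, h, zero_mul]
  obtain ⟨k, hk⟩ := Complex.sin_eq_zero_iff.1 h_sin
  have h_im : -z.im = k * π := by simpa using congrArg Complex.re hk
  have hk_zero : k = 0 := by
    rw [← abs_neg, h_im, abs_mul, abs_of_pos Real.pi_pos, mul_lt_iff_lt_one_left Real.pi_pos] at hz
    exact Int.abs_lt_one_iff.1 (by exact_mod_cast hz)
  simpa [hk_zero] using hk

lemma sinhSlope_ne_zero {a : ℝ} (ha : a ≠ 0) {z : ℂ} (hz : |a * z.im| < π) :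
    sinhSlope a z ≠ 0 := by
  have ha' : (a : ℂ) ≠ 0 := Complex.ofReal_ne_zero.2 ha
  rcases eq_or_ne z 0 with rfl | hz0
  · rwa [sinhSlope_zero]
  · rw [sinhSlope_of_ne_zero a hz0]
    refine div_ne_zero (fun h => mul_ne_zero ha' hz0 ?_) hz0
    exact (csinh_eq_zero_iff_of_abs_im_lt_pi (by rwa [Complex.im_ofReal_mul])).1 h

lemma sinhSlope_ofReal_ne_zero {a : ℝ} (ha : a ≠ 0) (x : ℝ) : sinhSlope a x ≠ 0 :=
  sinhSlope_ne_zero ha (by simpa using Real.pi_pos)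

lemma csinh_mul_csinh (a b c : ℂ) :
    Complex.sinh a * Complex.sinh b = Complex.sinh (a + b - c) * Complex.sinh c +
      Complex.sinh (a - c) * Complex.sinh (b - c) := by
  simp only [Complex.sinh_sub, Complex.sinh_add, Complex.cosh_add]
  linear_combination (-Complex.sinh a * Complex.sinh b) * Complex.cosh_sq c

lemma sinhSlope_mul_sinhSlope (a b c : ℝ) (z : ℂ) :
    sinhSlope a z * sinhSlope b z =
      sinhSlope (a + b - c) z * sinhSlope c z + sinhSlope (a - c) z * sinhSlope (b - c) z := by
  rcases eq_or_ne z 0 with rfl | hz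
  · simp only [sinhSlope_zero]
    push_cast
    ring
  · simp only [sinhSlope_of_ne_zero _ hz, div_mul_div_comm, ← add_div]
    push_cast
    rw [csinh_mul_csinh (a * z) (b * z) (c * z)]
    ring_nf

lemma tendsto_mul_prod_csinh (z : ℂ) :
    Tendsto (fun n : ℕ => z * ∏ j ∈ Finset.range n, (1 + (z / (π * (j + 1))) ^ 2)) atTop
      (𝓝 (Complex.sinh z)) := by
  have hpi : (π : ℂ) ≠ 0 := Complex.ofReal_ne_zero.2 Real.pi_ne_zero
  have euler := (Complex.tendsto_euler_sin_prod (z * Complex.I / π)).mul_const (-Complex.I)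
  rw [mul_div_cancel₀ _ hpi, Complex.sin_mul_I] at euler
  convert euler using 1
  · ext n
    have factor (j : ℕ) : 1 - (z * Complex.I / π) ^ 2 / ((j : ℂ) + 1) ^ 2 =
        1 + (z / (π * (j + 1))) ^ 2 := by
      rw [div_pow, div_div, ← mul_pow, mul_pow z, Complex.I_sq, div_pow]
      ring
    simp only [factor]
    linear_combination (z * ∏ j ∈ Finset.range n, (1 + (z / (π * (j + 1))) ^ 2)) * Complex.I_sq
  · rw [mul_assoc, mul_neg, Complex.I_mul_I, neg_neg, mul_one]

lemma tendsto_mul_prod_sinhSlope (a : ℝ) (z : ℂ) :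
    Tendsto (fun n : ℕ => (a : ℂ) * ∏ j ∈ Finset.range n, (1 + (a * z / (π * (j + 1))) ^ 2)) atTop
      (𝓝 (sinhSlope a z)) := by
  rcases eq_or_ne z 0 with rfl | hz
  · simp [sinhSlope_zero]
  · rw [sinhSlope_of_ne_zero a hz]
    refine ((tendsto_mul_prod_csinh (a * z)).div_const z).congr fun n => ?_
    rw [mul_right_comm, mul_div_cancel_right₀ _ hz]

lemma sinhRatio_zero (a b : ℝ) : sinhRatio a b 0 = (a / b : ℝ) := by
  simp [sinhRatio, sinhSlope_zero]

lemma sinhRatio_ofReal_of_ne_zero (a b : ℝ) {x : ℝ} (hx : x ≠ 0) :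
    sinhRatio a b x = (Real.sinh (a * x) / Real.sinh (b * x) : ℝ) := by
  have hx' : (x : ℂ) ≠ 0 := Complex.ofReal_ne_zero.2 hx
  rw [sinhRatio, sinhSlope_of_ne_zero a hx', sinhSlope_of_ne_zero b hx',
    div_div_div_cancel_right₀ hx']
  push_cast
  rfl

lemma analyticAt_sinhRatio (a : ℝ) {b : ℝ} (hb : b ≠ 0) {z : ℂ} (hz : |b * z.im| < π) :
    AnalyticAt ℂ (sinhRatio a b) z :=
  ((differentiable_sinhSlope a).analyticAt z).div ((differentiable_sinhSlope b).analyticAt z)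
    (sinhSlope_ne_zero hb hz)

lemma sinhRatio_mul_sinhRatio (a₁ a₂ : ℝ) {b₁ b₂ : ℝ} (hb₂ : b₂ ≠ 0) (x : ℝ) :
    sinhRatio a₁ b₁ x * sinhRatio a₂ b₂ x =
      sinhRatio (a₁ + a₂ - b₂) b₁ x + sinhRatio (a₁ - b₂) b₁ x * sinhRatio (a₂ - b₂) b₂ x := by
  have h_ne : sinhSlope b₂ x ≠ 0 := sinhSlope_ofReal_ne_zero hb₂ x
  simp only [sinhRatio, div_mul_div_comm]
  rw [sinhSlope_mul_sinhSlope a₁ a₂ b₂, add_div, mul_div_mul_right _ _ h_ne]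

lemma isEquivalent_sinh_atTop : Real.sinh ~[atTop] fun x => Real.exp x / 2 := by
  have h_neg : (fun x : ℝ => Real.exp (-x) / 2) =o[atTop] fun x => Real.exp x / 2 := by
    simp only [div_eq_inv_mul]
    refine ((Real.isLittleO_exp_comp_exp_comp.2 ?_).const_mul_left _).const_mul_right (by norm_num)
    simpa [← two_mul] using tendsto_id.const_mul_atTop (two_pos : (0 : ℝ) < 2)
  refine (IsEquivalent.refl.sub_isLittleO h_neg).congr_left (.of_forall fun x => ?_)
  simp only [Real.sinh_eq, Pi.sub_apply, sub_div]

lemma isEquivalent_sinh_mul_div_sinh_mul_atTop {a b : ℝ} (ha : 0 < a) (hb : 0 < b) :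
    (fun x => Real.sinh (a * x) / Real.sinh (b * x)) ~[atTop]
      fun x => Real.exp ((a - b) * x) := by
  have scaled {c : ℝ} (hc : 0 < c) :=
    isEquivalent_sinh_atTop.comp_tendsto (tendsto_id.const_mul_atTop hc)
  refine ((scaled ha).div (scaled hb)).congr_right (.of_forall fun x => ?_)
  simp only [Pi.div_apply, Function.comp_apply, id]
  rw [div_div_div_cancel_right₀ two_ne_zero, ← Real.exp_sub, sub_mul]

lemma isPosDefFun_sinhRatio {a b : ℝ} (ha : 0 ≤ a) (hb : 0 < b) (hab : a ≤ b) :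
    IsPosDefFun fun x : ℝ => sinhRatio a b x := by
  let u (c : ℝ) (j : ℕ) : ℝ := c / (π * (j + 1))
  have hu_pos (j : ℕ) : 0 < u b j := by positivity
  have hu_le (j : ℕ) : |u a j| ≤ |u b j| :=
    abs_le_abs_of_nonneg (by positivity) (by simp only [u]; gcongr)
  refine IsPosDefFun.of_tendsto (l := atTop) (F := fun n x => ((a / b : ℝ) : ℂ) *
    ∏ j ∈ Finset.range n, (1 + (u a j * x : ℂ) ^ 2) / (1 + (u b j * x : ℂ) ^ 2))
    (.of_forall fun n => (IsPosDefFun.const (div_nonneg ha hb.le)).mul <|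
      IsPosDefFun.prod _ fun j _ =>
        IsPosDefFun.one_add_sq_div_one_add_sq (hu_pos j).ne' (hu_le j)) fun x => ?_
  refine ((tendsto_mul_prod_sinhSlope a x).div (tendsto_mul_prod_sinhSlope b x)
    (sinhSlope_ofReal_ne_zero hb.ne' x)).congr fun n => ?_
  have u_mul (c : ℝ) (j : ℕ) : (u c j * x : ℂ) = c * x / (π * (j + 1)) := by
    simp only [u]
    push_cast
    ring
  simp only [Pi.div_apply, mul_div_mul_comm, ← Finset.prod_div_distrib, u_mul, Complex.ofReal_div]

-- Each step of the induction subtracts `b₂` from both `a₁` and `a₂`, until `a₂ ≤ b₂`.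
lemma isPosDefFun_sinhRatio_mul_sinhRatio {a₁ a₂ b₁ b₂ : ℝ} (ha₂ : 0 ≤ a₂) (ha : a₂ ≤ a₁)
    (hb₁ : 0 < b₁) (hb₂ : 0 < b₂) (h_le : a₁ ≤ b₁) (h_add : a₁ + a₂ ≤ b₁ + b₂) :
    IsPosDefFun fun x : ℝ => sinhRatio a₁ b₁ x * sinhRatio a₂ b₂ x := by
  obtain ⟨n, hn⟩ := exists_nat_ge (a₂ / b₂)
  rw [div_le_iff₀ hb₂] at hn
  induction n generalizing a₁ a₂ with
  | zero =>
    rw [Nat.cast_zero, zero_mul] at hn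
    exact (isPosDefFun_sinhRatio (ha₂.trans ha) hb₁ h_le).mul
      (isPosDefFun_sinhRatio ha₂ hb₂ (hn.trans hb₂.le))
  | succ n ih =>
    rcases le_total a₂ b₂ with h | h
    · exact (isPosDefFun_sinhRatio (ha₂.trans ha) hb₁ h_le).mul (isPosDefFun_sinhRatio ha₂ hb₂ h)
    · simp only [sinhRatio_mul_sinhRatio a₁ a₂ hb₂.ne']
      push_cast at hn
      exact (isPosDefFun_sinhRatio (by linarith) hb₁ (by linarith)).add
        (ih (by linarith) (by linarith) (by linarith) (by linarith) (by linarith))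

lemma add_le_add_of_isPosDefFun_sinhRatio_mul_sinhRatio {a₁ a₂ b₁ b₂ : ℝ} (ha₁ : 0 < a₁)
    (ha₂ : 0 < a₂) (hb₁ : 0 < b₁) (hb₂ : 0 < b₂)
    (h : IsPosDefFun fun x : ℝ => sinhRatio a₁ b₁ x * sinhRatio a₂ b₂ x) :
    a₁ + a₂ ≤ b₁ + b₂ := by
  by_contra! h_lt
  have equivalent := (isEquivalent_sinh_mul_div_sinh_mul_atTop ha₁ hb₁).mul
    (isEquivalent_sinh_mul_div_sinh_mul_atTop ha₂ hb₂)
  have exp_tendsto : Tendsto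
      (fun x => Real.exp ((a₁ - b₁) * x) * Real.exp ((a₂ - b₂) * x)) atTop atTop := by
    simp only [← Real.exp_add, ← add_mul]
    exact Real.tendsto_exp_atTop.comp (tendsto_id.const_mul_atTop (by linarith))
  have unbounded := equivalent.symm.tendsto_atTop exp_tendsto
  obtain ⟨x, hx, hx_pos⟩ :=
    ((unbounded.eventually_gt_atTop (sinhRatio a₁ b₁ 0 * sinhRatio a₂ b₂ 0).re).and
      (eventually_gt_atTop 0)).exists
  have bound := h.re_le x
  rw [sinhRatio_ofReal_of_ne_zero _ _ hx_pos.ne', sinhRatio_ofReal_of_ne_zero _ _ hx_pos.ne',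
    ← Complex.ofReal_mul, Complex.ofReal_re, Complex.ofReal_zero] at bound
  exact bound.not_gt hx

lemma analyticAt_sinhRatio_mul_sinhRatio (a₁ a₂ : ℝ) {b₁ b₂ : ℝ} (hb₁ : 0 < b₁) (hb₂ : 0 < b₂)
    {z : ℂ} (hz : |z.im| < π / max b₁ b₂) :
    AnalyticAt ℂ (fun z => sinhRatio a₁ b₁ z * sinhRatio a₂ b₂ z) z := by
  have im_lt {b : ℝ} (hb : 0 < b) (hb_le : b ≤ max b₁ b₂) : |b * z.im| < π := by
    rw [lt_div_iff₀ (hb.trans_le hb_le)] at hz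
    rw [abs_mul, abs_of_pos hb, mul_comm]
    exact (mul_le_mul_of_nonneg_left hb_le (abs_nonneg _)).trans_lt hz
  exact (analyticAt_sinhRatio a₁ hb₁.ne' (im_lt hb₁ (le_max_left _ _))).mul
    (analyticAt_sinhRatio a₂ hb₂.ne' (im_lt hb₂ (le_max_right _ _)))

-- Otherwise the zeros `± π * I / a₁` of the product lie in its disc of holomorphy around `0`.
lemma le_max_of_isPosDefFun_sinhRatio_mul_sinhRatio {a₁ a₂ b₁ b₂ : ℝ} (ha₁ : 0 < a₁)
    (ha₂ : 0 < a₂) (hb₁ : 0 < b₁) (hb₂ : 0 < b₂)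
    (h : IsPosDefFun fun x : ℝ => sinhRatio a₁ b₁ x * sinhRatio a₂ b₂ x) :
    a₁ ≤ max b₁ b₂ := by
  by_contra! h_lt
  have hm : 0 < max b₁ b₂ := lt_max_of_lt_left hb₁
  have analytic {z : ℂ} (hz : |z.im| < π / max b₁ b₂) :=
    analyticAt_sinhRatio_mul_sinhRatio a₁ a₂ hb₁ hb₂ hz
  have analytic_ofReal (x : ℝ) := analytic (z := x) (by
    rw [Complex.ofReal_im, abs_zero]
    exact div_pos Real.pi_pos hm)
  have differentiableOn_ball : DifferentiableOn ℂ
      (fun z => sinhRatio a₁ b₁ z * sinhRatio a₂ b₂ z) (Metric.ball 0 (π / max b₁ b₂)) :=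
    fun z hz => (analytic ((Complex.abs_im_le_norm z).trans_lt
      (mem_ball_zero_iff.1 hz))).differentiableAt.differentiableWithinAt
  have lt_radius : |π / a₁| < π / max b₁ b₂ := by
    rw [abs_of_pos (div_pos Real.pi_pos ha₁)]
    exact div_lt_div_of_pos_left Real.pi_pos hm h_lt
  have nonpos := IsPosDefFun.two_mul_apply_zero_le
    (G := fun z => sinhRatio a₁ b₁ z * sinhRatio a₂ b₂ z) h analytic_ofReal differentiableOn_ball
    lt_radius
  simp only [sinhRatio_zero] at nonpos
  simp only [sinhRatio, sinhSlope_neg, sinhSlope_pi_div_mul_I ha₁.ne', zero_div, zero_mul,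
    add_zero] at nonpos
  have pos : 0 < 2 * (a₁ / b₁ * (a₂ / b₂)) := by positivity
  exact pos.not_ge (by exact_mod_cast nonpos)

theorem sinh_two_factor_posdef_iff (a₁ a₂ b₁ b₂ : ℝ)
    (ha : a₁ ≥ a₂) (ha₂ : 0 < a₂) (hb : b₁ ≥ b₂) (hb₂ : 0 < b₂)
    (f : ℝ → ℝ)
    (hf : ∀ x : ℝ, x ≠ 0 → f x =
      Real.sinh (a₁ * x) * Real.sinh (a₂ * x) / (Real.sinh (b₁ * x) * Real.sinh (b₂ * x)))
    (hf0 : f 0 = a₁ * a₂ / (b₁ * b₂)) :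
    (IsPosDefFun fun x => ((f x : ℝ) : ℂ)) ↔ a₁ ≤ b₁ ∧ a₁ + a₂ ≤ b₁ + b₂ := by
  have ha₁ : 0 < a₁ := ha₂.trans_le ha
  have hb₁ : 0 < b₁ := hb₂.trans_le hb
  have f_eq : (fun x => ((f x : ℝ) : ℂ)) =
      fun x : ℝ => sinhRatio a₁ b₁ x * sinhRatio a₂ b₂ x := by
    ext x
    rcases eq_or_ne x 0 with rfl | hx
    · rw [hf0, Complex.ofReal_zero, sinhRatio_zero, sinhRatio_zero, ← Complex.ofReal_mul,
        div_mul_div_comm]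
    · rw [hf x hx, sinhRatio_ofReal_of_ne_zero _ _ hx, sinhRatio_ofReal_of_ne_zero _ _ hx,
        ← Complex.ofReal_mul, div_mul_div_comm]
  rw [f_eq]
  refine ⟨fun h => ⟨?_, ?_⟩, fun ⟨h_le, h_add⟩ => ?_⟩
  · simpa only [max_eq_left hb] using
      le_max_of_isPosDefFun_sinhRatio_mul_sinhRatio ha₁ ha₂ hb₁ hb₂ h
  · exact add_le_add_of_isPosDefFun_sinhRatio_mul_sinhRatio ha₁ ha₂ hb₁ hb₂ h
  · exact isPosDefFun_sinhRatio_mul_sinhRatio ha₂.le ha hb₁ hb₂ h_le h_add
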